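/- Let ω ⊂ ℝ^d be a nonempty open connected set, v : ℝ^d → ℝ^d a Lipschitz, uniformly bounded vector field, and μ⁰ a compactly supported probability measure on ℝ^d with supp(μ⁰) ⊂ ω. Let S be a nonempty open convex set strictly included in ω \ supp(μ⁰), and let δ > 0. Then there exists a pair (𝟙_ω u, μ) consisting of a Borel vector field 𝟙_ω u : ℝ^d × ℝ⁺ → ℝ^d vanishing outside ω and a time-evolving compactly supported measure μ, such that (μ, v + 𝟙_ω u) is a weak solution of ∂_t μ + ∇·((v + 𝟙_ω u) μ) = 0 on [0, δ] with μ(0) = μ⁰ and supp(μ(δ)) ⊂ S. -/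

import Mathlib

open MeasureTheory Set
open scoped ENNReal NNReal

noncomputable section

/-- The Euclidean space `ℝ^d`. -/
abbrev Euc (d : ℕ) := EuclideanSpace ℝ (Fin d)

/-- The support of a Borel measure: points all of whose open neighborhoods have
positive measure. -/
def msupport {d : ℕ} (μ : Measure (Euc d)) : Set (Euc d) :=
  {x | ∀ U : Set (Euc d), IsOpen U → x ∈ U → 0 < μ U}

/-- `(μ, w)` is a weak solution of the continuity equation
`∂ₜ μ + ∇·(w μ) = 0` on the time interval `[0, T]`. -/
def IsWeakSolutionOn {d : ℕ} (T : ℝ) (w : Euc d → ℝ → Euc d)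
    (μ : ℝ → Measure (Euc d)) : Prop :=
  (∫⁻ t in Icc (0:ℝ) T, ∫⁻ x, (‖w x t‖₊ : ℝ≥0∞) ∂(μ t)) < ⊤ ∧
  ∀ ψ : Euc d → ℝ, ContDiff ℝ (⊤ : ℕ∞) ψ → HasCompactSupport ψ →
    ∀ t ∈ Icc (0:ℝ) T,
      (∫ x, ψ x ∂(μ t)) - (∫ x, ψ x ∂(μ 0))
        = ∫ s in Icc (0:ℝ) t, (∫ x, (inner ℝ (gradient ψ x) (w x s) : ℝ) ∂(μ s))

/-! Join every point of `supp μ⁰` to a point `p` of the target by smooth curves inside `ω`: a smooth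
path in `ω` from `x₀` to `p` deforms to one starting at any nearby `x`, and finitely many such local
families, glued along a Borel partition, cover the compact support. Pushing `μ⁰` forward along this
family gives `μ(t)`. Curves through the same point at the same time may have different velocities;
the conditional expectation of the velocity given position and time is a Borel field which has the
same fluxes, hence `μ` solves the continuity equation driven by it. -/

open Function Topology

section Support

variable {d : ℕ} {μ : Measure (Euc d)}

theorem msupport_eq_support : msupport μ = μ.support := by
  rw [Measure.support_eq_forall_isOpen]
  exact Set.ext fun x => forall_congr' fun U => forall_comm

theorem ae_mem_msupport : ∀ᵐ x ∂μ, x ∈ msupport μ := by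
  rw [msupport_eq_support]
  exact Measure.support_mem_ae

theorem isClosed_msupport : IsClosed (msupport μ) := by
  rw [msupport_eq_support]
  exact Measure.isClosed_support

theorem msupport_subset_of_isClosed {F : Set (Euc d)} (hF : IsClosed F) (h : ∀ᵐ x ∂μ, x ∈ F) :
    msupport μ ⊆ F := by
  rw [msupport_eq_support]
  exact Measure.support_subset_of_isClosed hF h

theorem isCompact_msupport {K : Set (Euc d)} (hK : IsCompact K) (h : ∀ᵐ x ∂μ, x ∈ K) :
    IsCompact (msupport μ) :=
  hK.of_isClosed_subset isClosed_msupport (msupport_subset_of_isClosed hK.isClosed h)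

end Support

section Localization

variable {d : ℕ} {T : ℝ} {μ : ℝ → Measure (Euc d)} {w w' : Euc d → ℝ → Euc d}

theorem IsWeakSolutionOn.congr_field (hw : IsWeakSolutionOn T w μ)
    (h : ∀ t ∈ Icc 0 T, ∀ᵐ x ∂μ t, w x t = w' x t) : IsWeakSolutionOn T w' μ := by
  refine ⟨?_, fun ψ hψ hψc t ht => ?_⟩
  · refine (setLIntegral_congr_fun measurableSet_Icc fun s hs => ?_).trans_lt hw.1
    exact lintegral_congr_ae ((h s hs).mono fun x hx => by simp only [hx])
  · refine (hw.2 ψ hψ hψc t ht).trans (setIntegral_congr_fun measurableSet_Icc fun s hs => ?_)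
    exact integral_congr_ae ((h s ⟨hs.1, hs.2.trans ht.2⟩).mono fun x hx => by simp only [hx])

theorem IsWeakSolutionOn.exists_localized_control (hw : IsWeakSolutionOn T w μ)
    (hwm : Measurable (uncurry w)) {v : Euc d → Euc d} (hv : Measurable v) {ω : Set (Euc d)}
    (hω : MeasurableSet ω) (hμ : ∀ t ∈ Icc 0 T, ∀ᵐ x ∂μ t, x ∈ ω) :
    ∃ u : Euc d → ℝ → Euc d, Measurable (uncurry u) ∧ (∀ x t, x ∉ ω → u x t = 0) ∧
      IsWeakSolutionOn T (fun x t => v x + u x t) μ := by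
  refine ⟨fun x t => ω.indicator (fun y => w y t - v y) x, ?_, fun x t hx => ?_, ?_⟩
  · exact (hwm.sub (hv.comp measurable_fst)).indicator (measurable_fst hω)
  · exact indicator_of_notMem hx _
  · refine hw.congr_field fun t ht => (hμ t ht).mono fun x hx => ?_
    simp only [indicator_of_mem hx, add_sub_cancel]

end Localization

section Superposition

variable {Ω Z E : Type*} [MeasurableSpace Ω] [MeasurableSpace Z]
  [NormedAddCommGroup E] [NormedSpace ℝ E]

theorem exists_comp_forall_setIntegral_dual_apply_eq [CompleteSpace E] {P : Measure Ω}
    [IsFiniteMeasure P] {Φ : Ω → Z} (hΦ : Measurable Φ) {f : Ω → E} (hf : Integrable f P) :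
    ∃ W : Z → E, StronglyMeasurable W ∧ Integrable (W ∘ Φ) P ∧
      ∀ h : Z → StrongDual ℝ E, StronglyMeasurable h → Integrable (fun a => h (Φ a) (f a)) P →
        ∀ B, MeasurableSet B →
          ∫ a in Φ ⁻¹' B, h (Φ a) (W (Φ a)) ∂P = ∫ a in Φ ⁻¹' B, h (Φ a) (f a) ∂P := by
  obtain ⟨W, hW, hWΦ⟩ := StronglyMeasurable.exists_eq_measurable_comp
    (stronglyMeasurable_condExp (μ := P) (m := MeasurableSpace.comap Φ inferInstance) (f := f))
  refine ⟨W, hW, hWΦ ▸ integrable_condExp, fun h hh hhf B hB => ?_⟩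
  have pull_out : P[fun a => h (Φ a) (f a) | MeasurableSpace.comap Φ inferInstance] =ᵐ[P]
      fun a => h (Φ a) (W (Φ a)) := by
    have := condExp_bilin_of_stronglyMeasurable_left (ContinuousLinearMap.id ℝ (StrongDual ℝ E))
      (hh.comp_measurable (comap_measurable Φ)) hhf hf
    rwa [hWΦ] at this
  rw [← setIntegral_condExp hΦ.comap_le hhf ⟨B, hB, rfl⟩]
  exact integral_congr_ae (ae_restrict_of_ae pull_out.symm)

theorem integral_fderiv_comp_eq_sub {ψ : E → ℝ} (hψ : ContDiff ℝ 1 ψ) {γ γ' : ℝ → E} {a b : ℝ}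
    (hab : a ≤ b) (hγ : ∀ s ∈ Icc a b, HasDerivAt γ (γ' s) s) (hγ' : IntegrableOn γ' (Icc a b)) :
    ∫ s in Icc a b, fderiv ℝ ψ (γ s) (γ' s) = ψ (γ b) - ψ (γ a) := by
  have hcont : ContinuousOn (fun s => fderiv ℝ ψ (γ s)) (Icc a b) :=
    (hψ.continuous_fderiv one_ne_zero).comp_continuousOn
      fun s hs => (hγ s hs).continuousAt.continuousWithinAt
  obtain ⟨D, hD⟩ := isCompact_Icc.exists_bound_of_continuousOn hcont
  have hint : IntegrableOn (fun s => fderiv ℝ ψ (γ s) (γ' s)) (Icc a b) :=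
    (ContinuousLinearMap.id ℝ (StrongDual ℝ E)).integrable_of_bilin_of_bdd_left D
      (hcont.aestronglyMeasurable measurableSet_Icc)
      (ae_restrict_of_forall_mem measurableSet_Icc hD) hγ'
  rw [integral_Icc_eq_integral_Ioc, ← intervalIntegral.integral_of_le hab]
  refine intervalIntegral.integral_eq_sub_of_hasDerivAt (f := fun s => ψ (γ s)) (fun s hs => ?_)
    ((intervalIntegrable_iff_integrableOn_Icc_of_le hab).2 hint)
  rw [uIcc_of_le hab] at hs
  exact (hψ.differentiable one_ne_zero (γ s)).hasFDerivAt.comp_hasDerivAt s (hγ s hs)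

theorem prod_restrict_restrict_snd_preimage {ν : Measure Ω} [SFinite ν] {κ : Measure Z} [SFinite κ]
    {s t : Set Z} (hst : s ⊆ t) :
    (ν.prod (κ.restrict t)).restrict (Prod.snd ⁻¹' s) = ν.prod (κ.restrict s) := by
  rw [← univ_prod, ← Measure.prod_restrict, Measure.restrict_univ,
    Measure.restrict_restrict_of_subset hst]

theorem integrable_prod_restrict_mono {F : Type*} [NormedAddCommGroup F] {ν : Measure Ω}
    [SFinite ν] {κ : Measure Z} [SFinite κ] {s t : Set Z} (hst : s ⊆ t) {f : Ω × Z → F}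
    (hf : Integrable f (ν.prod (κ.restrict t))) :
    Integrable f (ν.prod (κ.restrict s)) :=
  prod_restrict_restrict_snd_preimage (ν := ν) (κ := κ) hst ▸ hf.restrict

theorem integrable_dual_apply_of_bounded [MeasurableSpace E] [BorelSpace E]
    [SecondCountableTopology E] {P : Measure Ω} {Y : Ω → E} (hY : Measurable Y)
    {h : E → StrongDual ℝ E} (hh : Continuous h) (hbdd : ∃ D, ∀ x, ‖h x‖ ≤ D) {f : Ω → E}
    (hf : Integrable f P) : Integrable (fun a => h (Y a) (f a)) P := by
  obtain ⟨D, hD⟩ := hbdd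
  exact (ContinuousLinearMap.id ℝ (StrongDual ℝ E)).integrable_of_bilin_of_bdd_left D
    (hh.stronglyMeasurable.comp_measurable hY).aestronglyMeasurable
    (ae_of_all _ fun _ => hD _) hf

variable [MeasurableSpace E] {ν : Measure Ω} {T : ℝ} {X V : Ω → ℝ → E}

/-- A measurable family of curves `X a`, indexed by a measure space, with velocities `V a` that are
integrable over the parameter and `[0, T]`. The velocity is carried along as data because its joint
measurability does not follow from that of `X`. -/
structure IsIntegrableCurveFamily (ν : Measure Ω) (T : ℝ) (X V : Ω → ℝ → E) : Prop where
  measurable : Measurable (uncurry X)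
  integrable_velocity : Integrable (uncurry V) (ν.prod (volume.restrict (Icc 0 T)))
  hasDerivAt : ∀ᵐ a ∂ν, ∀ t ∈ Icc 0 T, HasDerivAt (X a) (V a t) t

/-- A Borel field `w` which averages the velocities `V` over all curves of the family `X` passing
through a given point at a given time. It is characterised by having the same fluxes as `V` against
all bounded continuous covector fields. -/
structure IsMeanVelocity (ν : Measure Ω) (T : ℝ) (X V : Ω → ℝ → E) (w : E → ℝ → E) : Prop where
  measurable : Measurable (uncurry w)
  integrable : Integrable (fun q : Ω × ℝ => w (X q.1 q.2) q.2)
    (ν.prod (volume.restrict (Icc 0 T)))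
  integral_apply_eq : ∀ h : E → StrongDual ℝ E, Continuous h → (∃ D, ∀ x, ‖h x‖ ≤ D) →
    ∀ t ∈ Icc 0 T,
      ∫ q, h (X q.1 q.2) (w (X q.1 q.2) q.2) ∂ν.prod (volume.restrict (Icc 0 t)) =
        ∫ q, h (X q.1 q.2) (V q.1 q.2) ∂ν.prod (volume.restrict (Icc 0 t))

theorem IsIntegrableCurveFamily.exists_isMeanVelocity [CompleteSpace E] [BorelSpace E]
    [SecondCountableTopology E] [IsFiniteMeasure ν] (hXV : IsIntegrableCurveFamily ν T X V) :
    ∃ w, IsMeanVelocity ν T X V w := by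
  have hΦ : Measurable fun q : Ω × ℝ => (X q.1 q.2, q.2) := hXV.measurable.prodMk measurable_snd
  obtain ⟨W, hWm, hWint, hW⟩ :=
    exists_comp_forall_setIntegral_dual_apply_eq hΦ hXV.integrable_velocity
  refine ⟨fun x t => W (x, t), hWm.measurable, hWint, fun h hh hbdd t ht => ?_⟩
  rw [← prod_restrict_restrict_snd_preimage (Icc_subset_Icc_right ht.2)]
  exact hW (fun z => h z.1) (hh.stronglyMeasurable.comp_measurable measurable_fst)
    (integrable_dual_apply_of_bounded hXV.measurable hh hbdd hXV.integrable_velocity)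
    (Prod.snd ⁻¹' Icc 0 t) (measurable_snd measurableSet_Icc)

end Superposition

section WeakSolution

variable {Ω : Type*} [MeasurableSpace Ω] {d : ℕ} {ν : Measure Ω} {T : ℝ}
  {X V : Ω → ℝ → Euc d} {w : Euc d → ℝ → Euc d}

theorem IsMeanVelocity.lintegral_nnnorm_lt_top [SFinite ν] (hw : IsMeanVelocity ν T X V w)
    (hX : Measurable (uncurry X)) :
    ∫⁻ t in Icc 0 T, ∫⁻ x, (‖w x t‖₊ : ℝ≥0∞) ∂ν.map (X · t) < ⊤ := by
  have hpush : ∀ t, ∫⁻ x, (‖w x t‖₊ : ℝ≥0∞) ∂ν.map (X · t) = ∫⁻ a, ‖w (X a t) t‖ₑ ∂ν := fun t =>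
    lintegral_map (hw.measurable.of_uncurry_right).enorm hX.of_uncurry_right
  simp only [hpush]
  rw [← lintegral_prod_symm _ hw.integrable.aestronglyMeasurable.enorm]
  exact hw.integrable.2

variable [IsFiniteMeasure ν]

theorem IsIntegrableCurveFamily.integral_map_sub_eq (hXV : IsIntegrableCurveFamily ν T X V)
    {ψ : Euc d → ℝ} (hψ : ContDiff ℝ 1 ψ) (hψc : HasCompactSupport ψ) {t : ℝ}
    (ht : t ∈ Icc 0 T) :
    ∫ x, ψ x ∂ν.map (X · t) - ∫ x, ψ x ∂ν.map (X · 0) =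
      ∫ a, (∫ s in Icc 0 t, fderiv ℝ ψ (X a s) (V a s)) ∂ν := by
  have hXs : ∀ s, Measurable (X · s) := fun s => hXV.measurable.of_uncurry_right
  obtain ⟨D, hD⟩ := hψ.continuous.bounded_above_of_compact_support hψc
  have hint : ∀ s, Integrable (fun a => ψ (X a s)) ν := fun s =>
    .of_bound (hψ.continuous.measurable.comp (hXs s)).aestronglyMeasurable D
      (ae_of_all _ fun a => hD _)
  rw [integral_map (hXs t).aemeasurable hψ.continuous.aestronglyMeasurable,
    integral_map (hXs 0).aemeasurable hψ.continuous.aestronglyMeasurable,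
    ← integral_sub (hint t) (hint 0)]
  refine integral_congr_ae ?_
  have hsub : Icc 0 t ⊆ Icc 0 T := Icc_subset_Icc_right ht.2
  filter_upwards [hXV.hasDerivAt,
    (integrable_prod_restrict_mono hsub hXV.integrable_velocity).prod_right_ae] with a hXa hVa
  exact (integral_fderiv_comp_eq_sub hψ ht.1 (fun s hs => hXa s (hsub hs)) hVa).symm

theorem IsMeanVelocity.isWeakSolutionOn_map (hw : IsMeanVelocity ν T X V w)
    (hXV : IsIntegrableCurveFamily ν T X V) : IsWeakSolutionOn T w fun t => ν.map (X · t) := by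
  refine ⟨hw.lintegral_nnnorm_lt_top hXV.measurable, fun ψ hψ hψc t ht => ?_⟩
  have hψ1 : ContDiff ℝ 1 ψ := hψ.of_le (mod_cast le_top)
  have hDψ : Continuous (fderiv ℝ ψ) := hψ1.continuous_fderiv one_ne_zero
  have hbdd := hDψ.bounded_above_of_compact_support (hψc.fderiv ℝ)
  have integrable_apply : ∀ {f : Ω × ℝ → Euc d},
      Integrable f (ν.prod (volume.restrict (Icc 0 T))) →
      Integrable (fun q => fderiv ℝ ψ (X q.1 q.2) (f q)) (ν.prod (volume.restrict (Icc 0 t))) :=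
    fun hf => integrable_dual_apply_of_bounded hXV.measurable hDψ hbdd
      (integrable_prod_restrict_mono (Icc_subset_Icc_right ht.2) hf)
  simp only [inner_gradient_left]
  calc ∫ x, ψ x ∂ν.map (X · t) - ∫ x, ψ x ∂ν.map (X · 0)
      = ∫ a, (∫ s in Icc 0 t, fderiv ℝ ψ (X a s) (V a s)) ∂ν := hXV.integral_map_sub_eq hψ1 hψc ht
    _ = ∫ q, fderiv ℝ ψ (X q.1 q.2) (V q.1 q.2) ∂ν.prod (volume.restrict (Icc 0 t)) :=
      (integral_prod _ (integrable_apply hXV.integrable_velocity)).symm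
    _ = ∫ q, fderiv ℝ ψ (X q.1 q.2) (w (X q.1 q.2) q.2) ∂ν.prod (volume.restrict (Icc 0 t)) :=
      (hw.integral_apply_eq _ hDψ hbdd t ht).symm
    _ = ∫ s in Icc 0 t, ∫ a, fderiv ℝ ψ (X a s) (w (X a s) s) ∂ν :=
      integral_prod_symm _ (integrable_apply hw.integrable)
    _ = ∫ s in Icc 0 t, ∫ x, fderiv ℝ ψ x (w x s) ∂ν.map (X · s) := by
      refine integral_congr_ae (ae_of_all _ fun s => Eq.symm <|
        integral_map (f := fun x => fderiv ℝ ψ x (w x s)) ?_ ?_)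
      · exact hXV.measurable.of_uncurry_right.aemeasurable
      · exact (ContinuousLinearMap.id ℝ (StrongDual ℝ (Euc d))).aestronglyMeasurable_comp₂
          hDψ.aestronglyMeasurable hw.measurable.of_uncurry_right.aestronglyMeasurable

theorem IsIntegrableCurveFamily.exists_isWeakSolutionOn_map
    (hXV : IsIntegrableCurveFamily ν T X V) :
    ∃ w : Euc d → ℝ → Euc d, Measurable (uncurry w) ∧
      IsWeakSolutionOn T w fun t => ν.map (X · t) :=
  hXV.exists_isMeanVelocity.imp fun _ hw => ⟨hw.measurable, hw.isWeakSolutionOn_map hXV⟩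

end WeakSolution

section Steering

variable {E : Type*} [NormedAddCommGroup E] [NormedSpace ℝ E]

theorem exists_contDiff_path_of_isPreconnected [CompleteSpace E] {ω : Set E} (hω : IsOpen ω)
    (hωc : IsPreconnected ω) {x y : E} (hx : x ∈ ω) (hy : y ∈ ω) :
    ∃ g : ℝ → E, ContDiff ℝ (⊤ : ℕ∞) g ∧ g 0 = x ∧ g 1 = y ∧ ∀ t ∈ Icc (0 : ℝ) 1, g t ∈ ω := by
  obtain ⟨γ, hγ⟩ := (hω.isConnected_iff_isPathConnected.1 ⟨⟨x, hx⟩, hωc⟩).joinedIn x hx y hy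
  obtain ⟨ρ, hρ, hρω⟩ := (isCompact_range γ.continuous).exists_thickening_subset_open hω
    (range_subset_iff.2 hγ)
  have huc : UniformContinuous γ.extend :=
    (CompactSpace.uniformContinuous_of_continuous γ.continuous).comp
      (LipschitzWith.projIcc zero_le_one).uniformContinuous
  obtain ⟨f, hf, hfγ⟩ := huc.exists_contDiff_dist_le (half_pos hρ)
  have hfx : x - f 0 ∈ Metric.ball 0 (ρ / 2) := by
    simpa [dist_eq_norm, norm_sub_rev] using hfγ 0
  have hfy : y - f 1 ∈ Metric.ball 0 (ρ / 2) := by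
    simpa [dist_eq_norm, norm_sub_rev] using hfγ 1
  refine ⟨fun t => f t + AffineMap.lineMap (x - f 0) (y - f 1) t,
    hf.add (AffineMap.contDiff_lineMap (x - f 0) (y - f 1)), by simp, by simp,
    fun t ht => hρω (Metric.mem_thickening_iff.2 ⟨γ.extend t, mem_range_self _, ?_⟩)⟩
  have hline := (convex_ball (0 : E) (ρ / 2)).lineMap_mem hfx hfy ht
  rw [mem_ball_zero_iff] at hline
  calc dist (f t + AffineMap.lineMap (x - f 0) (y - f 1) t) (γ.extend t)
      ≤ dist (f t + AffineMap.lineMap (x - f 0) (y - f 1) t) (f t) + dist (f t) (γ.extend t) :=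
        dist_triangle _ _ _
    _ < ρ / 2 + ρ / 2 := add_lt_add (by simpa using hline) (hfγ t)
    _ = ρ := add_halves ρ

/-- `γ` is a curve from `x` to `p` in time `T`, with velocity `γ'` of norm at most `C`, that stays
in `K`. -/
structure IsSteeringCurve (K : Set E) (C T : ℝ) (x p : E) (γ γ' : ℝ → E) : Prop where
  mem : ∀ t ∈ Icc 0 T, γ t ∈ K
  norm_velocity_le : ∀ t ∈ Icc 0 T, ‖γ' t‖ ≤ C
  hasDerivAt : ∀ t ∈ Icc 0 T, HasDerivAt γ (γ' t) t
  initial : γ 0 = x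
  final : γ T = p

theorem IsSteeringCurve.mono {K K' : Set E} {C C' T : ℝ} {x p : E} {γ γ' : ℝ → E}
    (h : IsSteeringCurve K C T x p γ γ') (hK : K ⊆ K') (hC : C ≤ C') :
    IsSteeringCurve K' C' T x p γ γ' where
  mem t ht := hK (h.mem t ht)
  norm_velocity_le t ht := (h.norm_velocity_le t ht).trans hC
  hasDerivAt := h.hasDerivAt
  initial := h.initial
  final := h.final

theorem isSteeringCurve_deform {g : ℝ → E} (hg : Differentiable ℝ g) {T : ℝ} (hT : 0 < T)
    {M r : ℝ} (hM : ∀ t ∈ Icc (0 : ℝ) 1, ‖deriv g t‖ ≤ M) {x : E} (hx : dist x (g 0) ≤ r) :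
    IsSteeringCurve (Metric.cthickening r (g '' Icc 0 1)) (T⁻¹ * (M + r)) T x (g 1)
      (fun t => g (t / T) + (1 - t / T) • (x - g 0))
      (fun t => T⁻¹ • (deriv g (t / T) - (x - g 0))) := by
  have hxr : ‖x - g 0‖ ≤ r := by rwa [← dist_eq_norm]
  have hdiv : ∀ t ∈ Icc 0 T, t / T ∈ Icc (0 : ℝ) 1 := fun t ht =>
    ⟨div_nonneg ht.1 hT.le, div_le_one_of_le₀ ht.2 hT.le⟩
  refine ⟨fun t ht => ?_, fun t ht => ?_, fun t _ => ?_, by simp, by simp [hT.ne']⟩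
  · refine Metric.mem_cthickening_of_dist_le _ _ _ _ (mem_image_of_mem g (hdiv t ht)) ?_
    rw [dist_self_add_left, norm_smul, Real.norm_of_nonneg (sub_nonneg.2 (hdiv t ht).2)]
    exact (mul_le_of_le_one_left (norm_nonneg _) (sub_le_self 1 (hdiv t ht).1)).trans hxr
  · rw [norm_smul, Real.norm_of_nonneg (inv_nonneg.2 hT.le)]
    gcongr
    exact (norm_sub_le _ _).trans (add_le_add (hM _ (hdiv t ht)) hxr)
  · have hs : HasDerivAt (fun t => t / T) T⁻¹ t := by
      simpa using (hasDerivAt_id t).div_const T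
    rw [smul_sub, sub_eq_add_neg (T⁻¹ • _), ← neg_smul]
    exact ((hg (t / T)).hasDerivAt.scomp t hs).add ((hs.const_sub 1).smul_const (x - g 0))

variable [MeasurableSpace E]

/-- A Borel family of steering curves to `p`, one from each point of the Borel set `A`, which stay
in a common compact set `K` and have a common speed bound `C`. -/
structure IsSteeringFamily (A K : Set E) (C T : ℝ) (p : E) (X V : E → ℝ → E) : Prop where
  measurableSet : MeasurableSet A
  isCompact : IsCompact K
  measurable : Measurable (uncurry X)
  measurable_velocity : Measurable (uncurry V)
  isSteeringCurve : ∀ x ∈ A, IsSteeringCurve K C T x p (X x) (V x)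

/-- The points of `s` can be steered to `p` in time `T` inside `ω`. The family of curves is defined
on a Borel superset of `s`, so that the property passes to arbitrary subsets. -/
def IsSteerable (ω : Set E) (p : E) (T : ℝ) (s : Set E) : Prop :=
  ∃ A K C X V, s ⊆ A ∧ K ⊆ ω ∧ IsSteeringFamily A K C T p X V

theorem isSteerable_empty (ω : Set E) (p : E) (T : ℝ) : IsSteerable ω p T ∅ :=
  ⟨∅, ∅, 0, fun _ _ => 0, fun _ _ => 0, Subset.rfl, empty_subset ω, .empty, isCompact_empty,
    measurable_const, measurable_const, fun _ => False.elim⟩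

theorem IsSteerable.mono {ω s s' : Set E} {p : E} {T : ℝ} (hs : IsSteerable ω p T s)
    (hs' : s' ⊆ s) : IsSteerable ω p T s' := by
  obtain ⟨A, K, C, X, V, hsA, h⟩ := hs
  exact ⟨A, K, C, X, V, hs'.trans hsA, h⟩

open Classical in
theorem measurable_uncurry_piecewise {α β γ : Type*} [MeasurableSpace α] [MeasurableSpace β]
    [MeasurableSpace γ] {A : Set α} (hA : MeasurableSet A) {f g : α → β → γ}
    (hf : Measurable (uncurry f)) (hg : Measurable (uncurry g)) :
    Measurable (uncurry (A.piecewise f g)) := by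
  have : uncurry (A.piecewise f g) = (Prod.fst ⁻¹' A).piecewise (uncurry f) (uncurry g) := by
    ext q
    by_cases hq : q.1 ∈ A <;> simp [uncurry, piecewise, hq]
  exact this ▸ hf.piecewise (measurable_fst hA) hg

open Classical in
theorem IsSteeringFamily.piecewise {A B K L : Set E} {C D T : ℝ} {p : E} {X V Y W : E → ℝ → E}
    (hX : IsSteeringFamily A K C T p X V) (hY : IsSteeringFamily B L D T p Y W) :
    IsSteeringFamily (A ∪ B) (K ∪ L) (max C D) T p (A.piecewise X Y) (A.piecewise V W) where
  measurableSet := hX.measurableSet.union hY.measurableSet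
  isCompact := hX.isCompact.union hY.isCompact
  measurable := measurable_uncurry_piecewise hX.measurableSet hX.measurable hY.measurable
  measurable_velocity :=
    measurable_uncurry_piecewise hX.measurableSet hX.measurable_velocity hY.measurable_velocity
  isSteeringCurve x hx := by
    by_cases hxA : x ∈ A
    · simp only [piecewise_eq_of_mem _ _ _ hxA]
      exact (hX.isSteeringCurve x hxA).mono subset_union_left (le_max_left C D)
    · simp only [piecewise_eq_of_notMem _ _ _ hxA]
      exact (hY.isSteeringCurve x (hx.resolve_left hxA)).mono subset_union_right (le_max_right C D)

theorem IsSteerable.union {ω s s' : Set E} {p : E} {T : ℝ} (hs : IsSteerable ω p T s)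
    (hs' : IsSteerable ω p T s') : IsSteerable ω p T (s ∪ s') := by
  obtain ⟨A, K, C, X, V, hsA, hKω, hX⟩ := hs
  obtain ⟨B, L, D, Y, W, hsB, hLω, hY⟩ := hs'
  exact ⟨_, _, _, _, _, union_subset_union hsA hsB, union_subset hKω hLω, hX.piecewise hY⟩

variable [FiniteDimensional ℝ E] [BorelSpace E]

theorem exists_mem_nhds_isSteerable {ω : Set E} (hω : IsOpen ω) (hωc : IsPreconnected ω)
    {p : E} (hp : p ∈ ω) {T : ℝ} (hT : 0 < T) {x₀ : E} (hx₀ : x₀ ∈ ω) :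
    ∃ s ∈ 𝓝 x₀, IsSteerable ω p T s := by
  have : ProperSpace E := FiniteDimensional.proper_real E
  obtain ⟨g, hg, rfl, rfl, hgω⟩ := exists_contDiff_path_of_isPreconnected hω hωc hx₀ hp
  have hgK : IsCompact (g '' Icc 0 1) := isCompact_Icc.image hg.continuous
  have hg' : Continuous (deriv g) := hg.continuous_deriv (mod_cast le_top)
  obtain ⟨r, hr, hrω⟩ := hgK.exists_cthickening_subset_open hω (image_subset_iff.2 hgω)
  obtain ⟨M, hM⟩ := isCompact_Icc.exists_bound_of_continuousOn (s := Icc (0 : ℝ) 1) hg'.continuousOn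
  refine ⟨Metric.closedBall (g 0) r, Metric.closedBall_mem_nhds _ hr, _, _, _, _, _, Subset.rfl,
    hrω, Metric.isClosed_closedBall.measurableSet, hgK.cthickening, ?_, ?_, fun x hx =>
      isSteeringCurve_deform (hg.differentiable (by simp)) hT hM hx⟩
  · have := hg.continuous
    exact Continuous.measurable (by fun_prop)
  · exact Continuous.measurable (by fun_prop)

theorem isSteerable_of_isCompact {ω : Set E} (hω : IsOpen ω) (hωc : IsPreconnected ω)
    {p : E} (hp : p ∈ ω) {T : ℝ} (hT : 0 < T) {K : Set E} (hK : IsCompact K) (hKω : K ⊆ ω) :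
    IsSteerable ω p T K := by
  refine hK.induction_on (isSteerable_empty ω p T) (fun _ _ hst ht => ht.mono hst)
    (fun _ _ hs ht => hs.union ht) fun x hx => ?_
  obtain ⟨s, hs, hsteer⟩ := exists_mem_nhds_isSteerable hω hωc hp hT (hKω hx)
  exact ⟨s, mem_nhdsWithin_of_mem_nhds hs, hsteer⟩

end Steering

namespace IsSteeringFamily

variable {E : Type*} [NormedAddCommGroup E] [NormedSpace ℝ E] [MeasurableSpace E]
  {A K : Set E} {C T : ℝ} {p : E} {X V : E → ℝ → E} {ν : Measure E}

theorem ae_map_mem (hX : IsSteeringFamily A K C T p X V) (hA : ∀ᵐ x ∂ν, x ∈ A) {F : Set E}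
    (hF : MeasurableSet F) {t : ℝ} (hAF : ∀ x ∈ A, X x t ∈ F) :
    ∀ᵐ y ∂ν.map (X · t), y ∈ F :=
  (ae_map_iff hX.measurable.of_uncurry_right.aemeasurable hF).2 (hA.mono hAF)

theorem map_zero (hX : IsSteeringFamily A K C T p X V) (hA : ∀ᵐ x ∂ν, x ∈ A) :
    ν.map (X · 0) = ν := by
  have : (X · 0) =ᵐ[ν] id := hA.mono fun x hx => (hX.isSteeringCurve x hx).initial
  rw [Measure.map_congr this, Measure.map_id]

theorem isIntegrableCurveFamily [BorelSpace E] [SecondCountableTopology E] [IsFiniteMeasure ν]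
    (hX : IsSteeringFamily A K C T p X V) (hA : ∀ᵐ x ∂ν, x ∈ A) :
    IsIntegrableCurveFamily ν T X V where
  measurable := hX.measurable
  integrable_velocity := by
    refine .of_bound hX.measurable_velocity.aestronglyMeasurable C ?_
    filter_upwards [Measure.quasiMeasurePreserving_fst.ae hA,
      Measure.quasiMeasurePreserving_snd.ae (ae_restrict_mem measurableSet_Icc)] with q hqA hqT
    exact (hX.isSteeringCurve q.1 hqA).norm_velocity_le q.2 hqT
  hasDerivAt := hA.mono fun x hx => (hX.isSteeringCurve x hx).hasDerivAt

end IsSteeringFamily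

theorem concentrate_mass_borel_general {d : ℕ} {ω : Set (Euc d)} (hω : IsOpen ω)
    (hωc : IsPreconnected ω) {v : Euc d → Euc d} (hv : Measurable v) {μ0 : Measure (Euc d)}
    [IsFiniteMeasure μ0] (h0K : IsCompact (msupport μ0)) (h0ω : msupport μ0 ⊆ ω)
    {S : Set (Euc d)} (hS : (S ∩ ω).Nonempty) {δ : ℝ} (hδ : 0 < δ) :
    ∃ (u : Euc d → ℝ → Euc d) (μ : ℝ → Measure (Euc d)),
      Measurable (fun q : Euc d × ℝ => u q.1 q.2) ∧
      (∀ x t, x ∉ ω → u x t = 0) ∧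
      (∀ t ∈ Icc (0 : ℝ) δ, IsCompact (msupport (μ t))) ∧
      IsWeakSolutionOn δ (fun x t => v x + u x t) μ ∧
      μ 0 = μ0 ∧ msupport (μ δ) ⊆ S := by
  obtain ⟨p, hpS, hp⟩ := hS
  obtain ⟨A, K, C, X, V, hsA, hKω, hX⟩ := isSteerable_of_isCompact hω hωc hp hδ h0K h0ω
  have hA : ∀ᵐ x ∂μ0, x ∈ A := ae_mem_msupport.mono fun x hx => hsA hx
  have hK : ∀ t ∈ Icc 0 δ, ∀ᵐ y ∂μ0.map (X · t), y ∈ K := fun t ht =>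
    hX.ae_map_mem hA hX.isCompact.measurableSet fun x hx => (hX.isSteeringCurve x hx).mem t ht
  have hfinal : ∀ᵐ y ∂μ0.map (X · δ), y ∈ ({p} : Set (Euc d)) :=
    hX.ae_map_mem hA (measurableSet_singleton p) fun x hx => (hX.isSteeringCurve x hx).final
  obtain ⟨w, hwm, hw⟩ := (hX.isIntegrableCurveFamily hA).exists_isWeakSolutionOn_map
  obtain ⟨u, hum, huω, hu⟩ := hw.exists_localized_control hwm hv hω.measurableSet
    fun t ht => (hK t ht).mono fun y hy => hKω hy
  exact ⟨u, fun t => μ0.map (X · t), hum, huω,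
    fun t ht => isCompact_msupport hX.isCompact (hK t ht), hu, hX.map_zero hA,
    (msupport_subset_of_isClosed isClosed_singleton hfinal).trans (singleton_subset_iff.2 hpS)⟩

/-- Steering the whole mass of a measure supported in `ω` into a nonempty open
convex set `S ⊂⊂ ω \ supp(μ⁰)` in time `δ`, with a Borel localized control, in
the sense of weak solutions of the continuity equation. -/
theorem concentrate_mass_borel
    (d : ℕ) (ω : Set (Euc d)) (hω : ω.Nonempty) (hωo : IsOpen ω) (hωc : IsConnected ω)
    (v : Euc d → Euc d) (hvL : ∃ K : ℝ≥0, LipschitzWith K v)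
    (hvB : ∃ C : ℝ, ∀ x, ‖v x‖ ≤ C)
    (μ0 : Measure (Euc d)) [IsProbabilityMeasure μ0]
    (h0K : IsCompact (msupport μ0)) (h0ω : msupport μ0 ⊆ ω)
    (S : Set (Euc d)) (hS : S.Nonempty) (hSo : IsOpen S) (hSconv : Convex ℝ S)
    (hScp : IsCompact (closure S)) (hScl : closure S ⊆ ω \ msupport μ0)
    (δ : ℝ) (hδ : 0 < δ) :
    ∃ (u : Euc d → ℝ → Euc d) (μ : ℝ → Measure (Euc d)),
      Measurable (fun q : Euc d × ℝ => u q.1 q.2) ∧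
      (∀ x t, x ∉ ω → u x t = 0) ∧
      (∀ t ∈ Icc (0:ℝ) δ, IsCompact (msupport (μ t))) ∧
      IsWeakSolutionOn δ (fun x t => v x + u x t) μ ∧
      μ 0 = μ0 ∧ msupport (μ δ) ⊆ S := by
  exact concentrate_mass_borel_general hωo hωc.isPreconnected hvL.choose_spec.continuous.measurable
    h0K h0ω (hS.mono fun _ hx => ⟨hx, (hScl (subset_closure hx)).1⟩) hδ
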